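/- arXiv:math/0507016 — 3 statements merged into one kernel-verified Lean document; each statement's English description precedes it below -/
import Mathlib

section
/- Let k be a field and (V, ω) a finite-dimensional k-vector space equipped with a nondegenerate alternating bilinear form ω. Let U₀, U₁, U_∞ be Lagrangian subspaces of V that are pairwise complementary (Uᵢ ∩ Uⱼ = {0}, hence V = Uᵢ ⊕ Uⱼ, for all i ≠ j in {0, 1, ∞}). Then there exists a family (L_t)_{t ∈ k} of Lagrangian subspaces of V such that L₀ = U₀, L₁ = U₁, L_t ∩ U_∞ = {0} for every t ∈ k, and L_t ∩ L_s = {0} whenever t ≠ s in k. -/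
open LinearMap (BilinForm)

/-- Through three pairwise complementary Lagrangian subspaces `U₀, U₁, U_∞` of a
symplectic vector space there passes a one-parameter family `(L_t)_{t ∈ k}` of
pairwise transverse Lagrangian subspaces with `L₀ = U₀`, `L₁ = U₁`, each `L_t`
transverse to `U_∞`. -/
theorem pencil_through_three_lagrangians
    {k V : Type*} [Field k] [AddCommGroup V] [Module k V] [FiniteDimensional k V]
    (ω : BilinForm k V) (hnd : ω.Nondegenerate) (halt : ω.IsAlt)
    (U₀ U₁ Uinf : Submodule k V)
    (hU₀ : U₀ = ω.orthogonal U₀) (hU₁ : U₁ = ω.orthogonal U₁)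
    (hUinf : Uinf = ω.orthogonal Uinf)
    (h01 : U₀ ⊓ U₁ = ⊥) (h0inf : U₀ ⊓ Uinf = ⊥) (h1inf : U₁ ⊓ Uinf = ⊥) :
    ∃ L : k → Submodule k V,
      L 0 = U₀ ∧ L 1 = U₁ ∧
      (∀ t : k, L t = ω.orthogonal (L t)) ∧
      (∀ t : k, L t ⊓ Uinf = ⊥) ∧
      (∀ t s : k, t ≠ s → L t ⊓ L s = ⊥) := by
  have dimL : ∀ U : Submodule k V, U = ω.orthogonal U →
      Module.finrank k U + Module.finrank k U = Module.finrank k V := by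
    intro U hU
    have h := BilinForm.finrank_orthogonal hnd U
    rw [← hU] at h
    have := U.finrank_le
    omega
  have d0 := dimL _ hU₀
  have d1 := dimL _ hU₁
  have di := dimL _ hUinf
  have iso : ∀ U : Submodule k V, U = ω.orthogonal U → ∀ x ∈ U, ∀ y ∈ U, ω x y = 0 := by
    intro U hU x hx y hy
    rw [hU] at hy
    exact BilinForm.mem_orthogonal_iff.1 hy x hx
  have hc : IsCompl U₁ Uinf :=
    (Submodule.isCompl_iff_disjoint _ _ (by omega)).2 (disjoint_iff.2 h1inf)
  have z : ∀ A B : Submodule k V, A ⊓ B = ⊥ → ∀ x ∈ A, x ∈ B → x = 0 := by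
    intro A B h x hA hB
    have : x ∈ A ⊓ B := ⟨hA, hB⟩
    rwa [h, Submodule.mem_bot] at this
  obtain ⟨φ, hφ, hφ1⟩ : ∃ φ : V →ₗ[k] V, (∀ x, φ x ∈ Uinf) ∧ (∀ x, x + φ x ∈ U₁) := by
    refine ⟨U₁.projection Uinf hc - LinearMap.id, fun x => ?_, fun x => ?_⟩
    · have := Uinf.neg_mem (Submodule.sub_projection_mem hc x)
      simpa using this
    · have := Submodule.projection_apply_mem hc x
      simpa using this
  let f : k → V →ₗ[k] V := fun t => LinearMap.id + t • φ
  have hf : ∀ t x, f t x = x + t • φ x := fun t x => rfl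
  have key : ∀ t, ∀ x ∈ U₀, f t x ∈ Uinf → x = 0 := by
    intro t x hx h
    refine z _ _ h0inf x hx ?_
    have := Uinf.sub_mem h (Uinf.smul_mem t (hφ x))
    simpa [hf] using this
  have dim : ∀ t, Module.finrank k (U₀.map (f t)) = Module.finrank k U₀ := by
    intro t
    have inj : Function.Injective ((f t).domRestrict U₀) := by
      rw [← LinearMap.ker_eq_bot, LinearMap.ker_eq_bot']
      rintro ⟨x, hx⟩ h
      have h' : f t x = 0 := h
      exact Subtype.ext (key t x hx (h' ▸ Uinf.zero_mem))
    rw [← LinearMap.range_domRestrict]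
    exact LinearMap.finrank_range_of_inj inj
  refine ⟨fun t => U₀.map (f t), ?_, ?_, ?_, ?_, ?_⟩
  · have : f 0 = LinearMap.id := by simp [f]
    simp [this]
  · refine Submodule.eq_of_le_of_finrank_eq ?_ ?_
    · rintro _ ⟨x, hx, rfl⟩
      simpa [hf] using hφ1 x
    · rw [dim]; omega
  · intro t
    refine Submodule.eq_of_le_of_finrank_eq ?_ ?_
    · rintro _ ⟨y, hy, rfl⟩
      rw [BilinForm.mem_orthogonal_iff]
      rintro _ ⟨x, hx, rfl⟩
      have e0 := iso _ hU₀ x hx y hy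
      have e1 := iso _ hU₁ _ (hφ1 x) _ (hφ1 y)
      have e2 := iso _ hUinf _ (hφ x) _ (hφ y)
      simp only [map_add, LinearMap.add_apply, e0, e2] at e1
      simp only [hf, map_add, map_smul, LinearMap.add_apply, LinearMap.smul_apply, smul_eq_mul,
        e0, e2]
      linear_combination t * e1
    · rw [BilinForm.finrank_orthogonal hnd, dim]; omega
  · intro t
    rw [eq_bot_iff]
    rintro _ ⟨⟨x, hx, rfl⟩, h⟩
    rw [key t x hx h]; simp
  · intro t s hts
    rw [eq_bot_iff]
    rintro _ ⟨⟨x, hx, rfl⟩, ⟨y, hy, h⟩⟩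
    rw [hf, hf] at h
    have hxy : y - x = 0 := by
      refine z _ _ h0inf _ (U₀.sub_mem hy hx) ?_
      have e : y - x = t • φ x - s • φ y := by
        rw [sub_eq_sub_iff_add_eq_add, h, add_comm]
      rw [e]
      exact Uinf.sub_mem (Uinf.smul_mem _ (hφ x)) (Uinf.smul_mem _ (hφ y))
    obtain rfl := sub_eq_zero.1 hxy
    have h2 : (s - t) • φ y = 0 := by
      rw [sub_smul, sub_eq_zero]; exact add_left_cancel h
    have h3 : φ y = 0 := (smul_eq_zero.1 h2).resolve_left (sub_ne_zero.2 hts.symm)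
    have h4 := hφ1 y
    rw [h3, add_zero] at h4
    rw [z _ _ h01 y hx h4]; simp
end

section
/- Let k be a field and let α be the alternating bilinear form on k⁶ given by α(x, y) = x₁y₄ − x₄y₁ + x₂y₅ − x₅y₂ + x₃y₆ − x₆y₃ (i.e., α = x₁∧x₄ + x₂∧x₅ + x₃∧x₆ in the standard basis e₁, …, e₆). Let B = (b_{ij}) be a symmetric invertible 3×3 matrix over k. For t ∈ k let L_t ⊆ k⁶ be the span of the three vectors e_i + t·(b_{1i}e₄ + b_{2i}e₅ + b_{3i}e₆), i = 1, 2, 3, and let L_∞ = span(e₄, e₅, e₆). Then: (i) L₀ = span(e₁, e₂, e₃); (ii) each L_t, t ∈ k, and L_∞ is a Lagrangian subspace of (k⁶, α); and (iii) the subspaces L_t, t ∈ k ∪ {∞}, pairwise intersect only in {0}. -/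
/-- The standard alternating form `α = x₁∧x₄ + x₂∧x₅ + x₃∧x₆` on `k⁶`. -/
def stdAlt {k : Type*} [Field k] (x y : Fin 6 → k) : k :=
  x 0 * y 3 - x 3 * y 0 + x 1 * y 4 - x 4 * y 1 + x 2 * y 5 - x 5 * y 2

/-- The vector `eᵢ + t·(b_{1i}e₄ + b_{2i}e₅ + b_{3i}e₆)` of `k⁶` (for `i = 1,2,3`,
indexed here by `Fin 3`). -/
def pencilVec {k : Type*} [Field k] (B : Matrix (Fin 3) (Fin 3) k) (t : k) (i : Fin 3) :
    Fin 6 → k :=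
  (Pi.single (⟨i.val, by omega⟩ : Fin 6) (1 : k) : Fin 6 → k) +
    t • (B 0 i • (Pi.single (3 : Fin 6) (1 : k) : Fin 6 → k) +
          B 1 i • (Pi.single (4 : Fin 6) (1 : k) : Fin 6 → k) +
          B 2 i • (Pi.single (5 : Fin 6) (1 : k) : Fin 6 → k))

theorem mem_pencil_iff {k : Type*} [Field k] (B : Matrix (Fin 3) (Fin 3) k) (t : k)
    (x : Fin 6 → k) :
    x ∈ Submodule.span k {pencilVec B t 0, pencilVec B t 1, pencilVec B t 2} ↔
      x 3 = t * (B 0 0 * x 0 + B 0 1 * x 1 + B 0 2 * x 2) ∧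
      x 4 = t * (B 1 0 * x 0 + B 1 1 * x 1 + B 1 2 * x 2) ∧
      x 5 = t * (B 2 0 * x 0 + B 2 1 * x 1 + B 2 2 * x 2) := by
  rw [Submodule.mem_span_triple]
  constructor
  · rintro ⟨a, b, c, rfl⟩
    refine ⟨?_, ?_, ?_⟩ <;> simp [pencilVec, Pi.single_apply, Fin.ext_iff] <;> ring
  · rintro ⟨h3, h4, h5⟩
    refine ⟨x 0, x 1, x 2, ?_⟩
    ext i
    fin_cases i <;> simp [pencilVec, Pi.single_apply, Fin.ext_iff, h3, h4, h5] <;> ring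

theorem mem_inf_iff {k : Type*} [Field k] (x : Fin 6 → k) :
    x ∈ Submodule.span k {(Pi.single (3 : Fin 6) (1 : k) : Fin 6 → k),
      Pi.single (4 : Fin 6) (1 : k), Pi.single (5 : Fin 6) (1 : k)} ↔
      x 0 = 0 ∧ x 1 = 0 ∧ x 2 = 0 := by
  rw [Submodule.mem_span_triple]
  constructor
  · rintro ⟨a, b, c, rfl⟩
    refine ⟨?_, ?_, ?_⟩ <;> simp [Pi.single_apply, Fin.ext_iff]
  · rintro ⟨h3, h4, h5⟩
    refine ⟨x 3, x 4, x 5, ?_⟩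
    ext i
    fin_cases i <;> simp [Pi.single_apply, Fin.ext_iff, h3, h4, h5]

theorem finrank_triple {k : Type*} [Field k] (u v w : Fin 6 → k)
    (h : ∀ a b c : k, a • u + b • v + c • w = 0 → a = 0 ∧ b = 0 ∧ c = 0) :
    Module.finrank k (Submodule.span k {u, v, w}) = 3 := by
  have hli : LinearIndependent k ![u, v, w] := by
    rw [Fintype.linearIndependent_iff]
    intro g hg
    simp [Fin.sum_univ_three] at hg
    obtain ⟨h0, h1, h2⟩ := h _ _ _ hg
    intro i
    fin_cases i <;> assumption
  have := finrank_span_eq_card hli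
  have hr : Set.range ![u, v, w] = {u, v, w} := by
    ext z
    simp [eq_comm]
    tauto
  rw [hr] at this
  simpa using this

/-- The explicit family `exp(tB)` of pairwise disjoint Lagrangian planes through
three given points of `LG(3,6)`, for a symmetric invertible matrix `B`. -/
theorem explicit_lagrangian_pencil
    {k : Type*} [Field k] (B : Matrix (Fin 3) (Fin 3) k)
    (hsym : B.IsSymm) (hinv : IsUnit B.det)
    (L : k → Submodule k (Fin 6 → k))
    (hL : ∀ t : k, L t =
      Submodule.span k {pencilVec B t 0, pencilVec B t 1, pencilVec B t 2})
    (Linf : Submodule k (Fin 6 → k))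
    (hLinf : Linf = Submodule.span k
      {Pi.single (3 : Fin 6) (1 : k), Pi.single (4 : Fin 6) (1 : k),
        Pi.single (5 : Fin 6) (1 : k)}) :
    -- (i) `L 0` is the span of `e₁, e₂, e₃`
    L 0 = Submodule.span k
        {Pi.single (0 : Fin 6) (1 : k), Pi.single (1 : Fin 6) (1 : k),
          Pi.single (2 : Fin 6) (1 : k)} ∧
    -- (ii) each `L t` and `Linf` is Lagrangian: 3-dimensional and isotropic for `α`
    (∀ t : k, Module.finrank k (L t) = 3 ∧
      ∀ x ∈ L t, ∀ y ∈ L t, stdAlt x y = 0) ∧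
    (Module.finrank k Linf = 3 ∧ ∀ x ∈ Linf, ∀ y ∈ Linf, stdAlt x y = 0) ∧
    -- (iii) the subspaces pairwise intersect only in `{0}`
    (∀ t s : k, t ≠ s → L t ⊓ L s = ⊥) ∧
    (∀ t : k, L t ⊓ Linf = ⊥) := by
  have s01 : B 0 1 = B 1 0 := hsym.apply 1 0
  have s02 : B 0 2 = B 2 0 := hsym.apply 2 0
  have s12 : B 1 2 = B 2 1 := hsym.apply 2 1
  subst hLinf
  refine ⟨?_, ?_, ⟨?_, ?_⟩, ?_, ?_⟩
  · rw [hL]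
    have e : ∀ i : Fin 3, pencilVec B 0 i = Pi.single (⟨i.val, by omega⟩ : Fin 6) (1 : k) := by
      intro i
      simp [pencilVec]
    rw [e, e, e]
    rfl
  · intro t
    rw [hL]
    refine ⟨finrank_triple _ _ _ ?_, ?_⟩
    · intro a b c h
      have h0 := congrFun h 0
      have h1 := congrFun h 1
      have h2 := congrFun h 2
      simp [pencilVec, Pi.single_apply, Fin.ext_iff] at h0 h1 h2
      exact ⟨h0, h1, h2⟩
    · intro x hx y hy
      rw [mem_pencil_iff] at hx hy
      obtain ⟨a, b, c⟩ := hx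
      obtain ⟨a', b', c'⟩ := hy
      rw [stdAlt, a, b, c, a', b', c', s01, s02, s12]
      ring
  · apply finrank_triple
    intro a b c h
    have h0 := congrFun h 3
    have h1 := congrFun h 4
    have h2 := congrFun h 5
    simp [Pi.single_apply, Fin.ext_iff] at h0 h1 h2
    exact ⟨h0, h1, h2⟩
  · intro x hx y hy
    rw [mem_inf_iff] at hx hy
    obtain ⟨a, b, c⟩ := hx
    obtain ⟨a', b', c'⟩ := hy
    rw [stdAlt, a, b, c, a', b', c']
    ring
  · intro t s hts
    rw [eq_bot_iff]
    rintro x ⟨hx, hy⟩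
    rw [SetLike.mem_coe, hL, mem_pencil_iff] at hx hy
    obtain ⟨a, b, c⟩ := hx
    obtain ⟨a', b', c'⟩ := hy
    have hd : t - s ≠ 0 := sub_ne_zero.mpr hts
    have z0 : B 0 0 * x 0 + B 0 1 * x 1 + B 0 2 * x 2 = 0 := by
      apply (mul_eq_zero.mp _).resolve_left hd
      linear_combination a' - a
    have z1 : B 1 0 * x 0 + B 1 1 * x 1 + B 1 2 * x 2 = 0 := by
      apply (mul_eq_zero.mp _).resolve_left hd
      linear_combination b' - b
    have z2 : B 2 0 * x 0 + B 2 1 * x 1 + B 2 2 * x 2 = 0 := by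
      apply (mul_eq_zero.mp _).resolve_left hd
      linear_combination c' - c
    have hv : (![x 0, x 1, x 2] : Fin 3 → k) = 0 := by
      apply Matrix.eq_zero_of_mulVec_eq_zero hinv.ne_zero
      ext i
      fin_cases i <;> simp [Matrix.mulVec, dotProduct, Fin.sum_univ_three, z0, z1, z2]
    have x0 : x 0 = 0 := congrFun hv 0
    have x1 : x 1 = 0 := congrFun hv 1
    have x2 : x 2 = 0 := congrFun hv 2
    rw [z0, mul_zero] at a
    rw [z1, mul_zero] at b
    rw [z2, mul_zero] at c
    rw [Submodule.mem_bot]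
    ext i
    fin_cases i <;> assumption
  · intro t
    rw [eq_bot_iff]
    rintro x ⟨hx, hy⟩
    rw [SetLike.mem_coe] at hx hy
    rw [hL, mem_pencil_iff] at hx
    rw [mem_inf_iff] at hy
    obtain ⟨a, b, c⟩ := hx
    obtain ⟨x0, x1, x2⟩ := hy
    simp only [x0, x1, x2, mul_zero, add_zero] at a b c
    rw [Submodule.mem_bot]
    ext i
    fin_cases i <;> assumption
end

section
/- Let k be a field, B = (b_{ij}) an invertible 3×3 matrix over k, and for t ∈ k let v_i(t) = e_i + t·(b_{1i}e₄ + b_{2i}e₅ + b_{3i}e₆) ∈ k⁶, i = 1, 2, 3. Then there exist elements w₀, w₁, w₂, w₃ of the third exterior power ⋀³(k⁶), independent of t, such that v₁(t) ∧ v₂(t) ∧ v₃(t) = w₀ + t·w₁ + t²·w₂ + t³·w₃ for all t ∈ k, with w₀ = e₁∧e₂∧e₃ and w₃ = det(B)·(e₄∧e₅∧e₆) ≠ 0. (Hence the Plücker image t ↦ [v₁(t)∧v₂(t)∧v₃(t)] of the family of Lagrangian planes exp(tB) is a rational curve of degree exactly 3 — the twisted cubic exp(t) = (1 : tB : t²∧²B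 : t³det(B)) through the three given points of LG(3,6) constructed in Lemma 2.9.) -/
open ExteriorAlgebra

theorem triple_expand {k A : Type*} [Field k] [Ring A] [Algebra k A]
    (B : Matrix (Fin 3) (Fin 3) k) (x y z : A)
    (hx : x * x = 0) (hy : y * y = 0) (hz : z * z = 0)
    (hyx : y * x = -(x * y)) (hzx : z * x = -(x * z)) (hzy : z * y = -(y * z)) :
    (B 0 0 • x + B 1 0 • y + B 2 0 • z) * (B 0 1 • x + B 1 1 • y + B 2 1 • z) *
      (B 0 2 • x + B 1 2 • y + B 2 2 • z) = B.det • (x * y * z) := by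
  have hx' (w : A) : x * (x * w) = 0 := by rw [← mul_assoc, hx, zero_mul]
  have hy' (w : A) : y * (y * w) = 0 := by rw [← mul_assoc, hy, zero_mul]
  have hz' (w : A) : z * (z * w) = 0 := by rw [← mul_assoc, hz, zero_mul]
  have hyx' (w : A) : y * (x * w) = -(x * (y * w)) := by
    rw [← mul_assoc, hyx, neg_mul, mul_assoc]
  have hzx' (w : A) : z * (x * w) = -(x * (z * w)) := by
    rw [← mul_assoc, hzx, neg_mul, mul_assoc]
  have hzy' (w : A) : z * (y * w) = -(y * (z * w)) := by
    rw [← mul_assoc, hzy, neg_mul, mul_assoc]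
  rw [Matrix.det_fin_three]
  simp only [mul_add, add_mul, smul_mul_assoc, mul_smul_comm, mul_assoc, hx, hy, hz, hyx, hzx, hzy,
    hx', hy', hz', hyx', hzx', hzy', mul_neg, neg_mul, neg_neg, mul_zero, zero_mul, smul_zero, neg_zero, smul_neg,
    add_zero, zero_add]
  module

theorem ext_swap {k M : Type*} [Field k] [AddCommGroup M] [Module k M] (u v : M) :
    ι k u * ι k v = -(ι k v * ι k u) :=
  eq_neg_of_add_eq_zero_left (ExteriorAlgebra.ι_add_mul_swap u v)

theorem e456_ne_zero (k : Type*) [Field k] :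
    ι k (Pi.single (3 : Fin 6) (1 : k) : Fin 6 → k) *
            ι k (Pi.single (4 : Fin 6) (1 : k) : Fin 6 → k) *
            ι k (Pi.single (5 : Fin 6) (1 : k) : Fin 6 → k) ≠ 0 := by
  intro h
  let f : (Fin 6 → k) [⋀^Fin 3]→ₗ[k] k :=
    (Matrix.detRowAlternating (n := Fin 3) (R := k)).compLinearMap
      (LinearMap.funLeft k k (![3, 4, 5] : Fin 3 → Fin 6))
  let v : Fin 3 → Fin 6 → k := ![Pi.single 3 1, Pi.single 4 1, Pi.single 5 1]
  have h1 : ExteriorAlgebra.ιMulti k 3 v = 0 := by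
    rw [ExteriorAlgebra.ιMulti_apply, ← h]
    simp [v, List.ofFn_succ, mul_assoc]
  have h2 := ExteriorAlgebra.liftAlternating_apply_ιMulti (R := k)
    (Function.update (0 : ∀ i, (Fin 6 → k) [⋀^Fin i]→ₗ[k] k) 3 f) v
  rw [h1, map_zero, Function.update_self] at h2
  have h3 : f v = 1 := by
    change Matrix.det (Matrix.of (fun i j => v i ((![3, 4, 5] : Fin 3 → Fin 6) j))) = 1
    rw [Matrix.det_fin_three]
    simp [v, Pi.single_apply]
  rw [h3] at h2
  exact zero_ne_one h2

/-- The Plücker image `t ↦ v₁(t) ∧ v₂(t) ∧ v₃(t)` of the family of Lagrangian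
planes `exp(tB)` is a cubic curve: it is a polynomial of degree exactly `3` in
`t` with constant term `e₁∧e₂∧e₃` and leading term `det(B)·(e₄∧e₅∧e₆) ≠ 0`. -/
theorem pluecker_image_is_cubic
    {k : Type*} [Field k] (B : Matrix (Fin 3) (Fin 3) k) (hinv : IsUnit B.det) :
    ∃ w₀ w₁ w₂ w₃ : ExteriorAlgebra k (Fin 6 → k),
      w₀ = ι k (Pi.single (0 : Fin 6) (1 : k) : Fin 6 → k) *
            ι k (Pi.single (1 : Fin 6) (1 : k) : Fin 6 → k) *
            ι k (Pi.single (2 : Fin 6) (1 : k) : Fin 6 → k) ∧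
      w₃ = B.det • (ι k (Pi.single (3 : Fin 6) (1 : k) : Fin 6 → k) *
            ι k (Pi.single (4 : Fin 6) (1 : k) : Fin 6 → k) *
            ι k (Pi.single (5 : Fin 6) (1 : k) : Fin 6 → k)) ∧
      w₃ ≠ 0 ∧
      ∀ t : k,
        ι k (pencilVec B t 0) * ι k (pencilVec B t 1) * ι k (pencilVec B t 2) =
          w₀ + t • w₁ + t ^ 2 • w₂ + t ^ 3 • w₃ := by
  let a (i : Fin 3) : ExteriorAlgebra k (Fin 6 → k) :=
    ι k (Pi.single (⟨i.val, by omega⟩ : Fin 6) (1 : k) : Fin 6 → k)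
  let x := ι k (Pi.single (3 : Fin 6) (1 : k) : Fin 6 → k)
  let y := ι k (Pi.single (4 : Fin 6) (1 : k) : Fin 6 → k)
  let z := ι k (Pi.single (5 : Fin 6) (1 : k) : Fin 6 → k)
  let u (i : Fin 3) : ExteriorAlgebra k (Fin 6 → k) := B 0 i • x + B 1 i • y + B 2 i • z
  have hv (t : k) (i : Fin 3) : ι k (pencilVec B t i) = a i + t • u i := by
    simp only [pencilVec, map_add, map_smul, a, u, x, y, z]
  have hdet : u 0 * u 1 * u 2 = B.det • (x * y * z) :=
    triple_expand B x y z (ι_sq_zero _) (ι_sq_zero _) (ι_sq_zero _)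
      (ext_swap _ _) (ext_swap _ _) (ext_swap _ _)
  refine ⟨_, u 0 * a 1 * a 2 + a 0 * u 1 * a 2 + a 0 * a 1 * u 2,
    u 0 * u 1 * a 2 + u 0 * a 1 * u 2 + a 0 * u 1 * u 2, _, rfl, rfl,
    smul_ne_zero hinv.ne_zero (e456_ne_zero k), fun t => ?_⟩
  change _ = a 0 * a 1 * a 2 + _ + _ + t ^ 3 • (B.det • (x * y * z))
  rw [← hdet, hv, hv, hv]
  generalize u 0 = u0, u 1 = u1, u 2 = u2, a 0 = a0, a 1 = a1, a 2 = a2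
  simp only [mul_add, add_mul, smul_mul_assoc, mul_smul_comm, mul_assoc]
  module
end
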